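/- Let X be a complete real inner product space, let C¹, C² ⊆ X be nonempty closed convex sets, and let F : X → X be any map. Define the Davis–Yin operator T(z) = z − P_{C¹}(z) + P_{C²}(2P_{C¹}(z) − z − F(P_{C¹}(z))). Then for every x ∈ X the following are equivalent: (i) there exists z ∈ X with z = T(z) and x = P_{C¹}(z); (ii) x ∈ C¹ ∩ C² and −F(x) ∈ N_{C¹}(x) + N_{C²}(x), i.e., there exist u ∈ N_{C¹}(x) and v ∈ N_{C²}(x) with F(x) + u + v = 0. -/

import Mathlib

open RealInnerProductSpace

/-!
The metric projection onto a convex set `C` is the resolvent of its normal cone: `P z = x` if and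
only if `z - x ∈ N_C x`. A fixed point `z` of the Davis–Yin operator with `P₁ z = x` therefore
satisfies `u := z - x ∈ N₁ x` and, since then also `P₂ (2 • x - z - F x) = x`, it satisfies
`v := x - z - F x ∈ N₂ x`; these two vectors add up to `-F x`. Conversely, if `u ∈ N₁ x` and
`v ∈ N₂ x` add up to `-F x`, then `z = x + u` is fixed. Only the resolvent property enters, so the
same correspondence holds for arbitrary set-valued operators on an additive group.
-/

section Resolvent

variable {G : Type*} [AddCommGroup G]

/-- `J` is the everywhere defined, single-valued resolvent `(id + A)⁻¹` of the set-valued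
operator `A`. -/
def IsResolvent (A : G → Set G) (J : G → G) : Prop :=
  ∀ z x, J z = x ↔ z - x ∈ A x

/-- The Davis–Yin three-operator splitting map built from two resolvents `J₁`, `J₂` and a
single-valued map `F`, with unit step size. -/
def davisYin (J₁ J₂ F : G → G) (z : G) : G :=
  z - J₁ z + J₂ (2 • J₁ z - z - F (J₁ z))

theorem davisYin_eq_self_iff {J₁ J₂ F : G → G} {z : G} :
    davisYin J₁ J₂ F z = z ↔ J₂ (2 • J₁ z - z - F (J₁ z)) = J₁ z := by
  rw [davisYin, sub_add_eq_add_sub, sub_eq_iff_eq_add, add_right_inj]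

theorem IsResolvent.exists_davisYin_eq_self_iff {A B : G → Set G} {J₁ J₂ : G → G}
    (h₁ : IsResolvent A J₁) (h₂ : IsResolvent B J₂) (F : G → G) (x : G) :
    (∃ z, davisYin J₁ J₂ F z = z ∧ J₁ z = x) ↔ ∃ u ∈ A x, ∃ v ∈ B x, F x + u + v = 0 := by
  constructor
  · rintro ⟨z, hz, rfl⟩
    refine ⟨z - J₁ z, (h₁ _ _).1 rfl, _, (h₂ _ _).1 (davisYin_eq_self_iff.1 hz), ?_⟩
    abel
  · rintro ⟨u, hu, v, hv, hsum⟩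
    have hJ₁ : J₁ (x + u) = x := (h₁ _ _).2 (by rwa [add_sub_cancel_left])
    have hv_eq : 2 • x - (x + u) - F x - x = v := by
      rw [eq_neg_of_add_eq_zero_right hsum]
      abel
    refine ⟨x + u, davisYin_eq_self_iff.2 ?_, hJ₁⟩
    rw [hJ₁, h₂, hv_eq]
    exact hv

end Resolvent

/-- `P` sends every point to a nearest point of `C`, that is, `P` is a metric projection
onto `C`. -/
def IsMetricProjection {X : Type*} [SeminormedAddCommGroup X] (C : Set X) (P : X → X) :
    Prop :=
  ∀ z, P z ∈ C ∧ ∀ x ∈ C, ‖z - P z‖ ≤ ‖z - x‖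

section NormalCone

variable {X : Type*} [NormedAddCommGroup X] [InnerProductSpace ℝ X] {C : Set X}

/-- The normal cone of `C` at `x`, as a set-valued operator on the whole space: it is empty when
`x ∉ C`. -/
def normalCone (C : Set X) (x : X) : Set X :=
  {v | x ∈ C ∧ ∀ y ∈ C, ⟪v, y - x⟫ ≤ 0}

theorem inner_sub_sub_nonneg_of_mem_normalCone {x y u v : X} (hu : u ∈ normalCone C x)
    (hv : v ∈ normalCone C y) : 0 ≤ ⟪u - v, x - y⟫ := by
  have hux : ⟪u, y - x⟫ ≤ 0 := hu.2 y hv.1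
  have hvy : ⟪v, x - y⟫ ≤ 0 := hv.2 x hu.1
  rw [← neg_sub x y, inner_neg_right] at hux
  rw [inner_sub_left]
  linarith

theorem eq_of_sub_mem_normalCone {z x y : X} (hx : z - x ∈ normalCone C x)
    (hy : z - y ∈ normalCone C y) : x = y := by
  have hmono := inner_sub_sub_nonneg_of_mem_normalCone hx hy
  rw [sub_sub_sub_cancel_left, ← neg_sub x y, inner_neg_left, neg_nonneg] at hmono
  exact sub_eq_zero.1 (real_inner_self_nonpos.1 hmono)

theorem sub_mem_normalCone_of_forall_norm_le (hC : Convex ℝ C) {z p : X} (hp : p ∈ C)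
    (hmin : ∀ w ∈ C, ‖z - p‖ ≤ ‖z - w‖) : z - p ∈ normalCone C p := by
  have : Nonempty C := ⟨p, hp⟩
  have hbdd : BddBelow (Set.range fun w : C => ‖z - w‖) :=
    ⟨0, Set.forall_mem_range.2 fun _ => norm_nonneg _⟩
  have hinf : ‖z - p‖ = ⨅ w : C, ‖z - w‖ :=
    le_antisymm (le_ciInf fun w => hmin w w.2) (ciInf_le hbdd ⟨p, hp⟩)
  exact ⟨hp, (norm_eq_iInf_iff_real_inner_le_zero hC hp).1 hinf⟩

theorem IsMetricProjection.isResolvent_normalCone {P : X → X} (hP : IsMetricProjection C P)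
    (hC : Convex ℝ C) : IsResolvent (normalCone C) P := by
  intro z x
  have hPz : z - P z ∈ normalCone C (P z) :=
    sub_mem_normalCone_of_forall_norm_le hC (hP z).1 (hP z).2
  exact ⟨fun h => h ▸ hPz, eq_of_sub_mem_normalCone hPz⟩

end NormalCone

theorem stmt_7_general {X : Type*} [NormedAddCommGroup X] [InnerProductSpace ℝ X]
    {C₁ C₂ : Set X} (h₁cv : Convex ℝ C₁) (h₂cv : Convex ℝ C₂) {P₁ P₂ : X → X}
    (hP₁ : IsMetricProjection C₁ P₁) (hP₂ : IsMetricProjection C₂ P₂) (F T : X → X)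
    (hT : ∀ z, T z = z - P₁ z + P₂ ((2 : ℝ) • P₁ z - z - F (P₁ z))) (x : X) :
    (∃ z, T z = z ∧ x = P₁ z) ↔
      (x ∈ C₁ ∧ x ∈ C₂ ∧ ∃ u v : X,
        (∀ y ∈ C₁, ⟪u, y - x⟫ ≤ 0) ∧ (∀ y ∈ C₂, ⟪v, y - x⟫ ≤ 0) ∧
        F x + u + v = 0) := by
  obtain rfl : T = davisYin P₁ P₂ F :=
    funext fun z => by rw [hT, davisYin, ofNat_smul_eq_nsmul]
  have hzero := (hP₁.isResolvent_normalCone h₁cv).exists_davisYin_eq_self_iff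
    (hP₂.isResolvent_normalCone h₂cv) F x
  simp only [eq_comm (a := x), hzero]
  constructor
  · rintro ⟨u, ⟨hx₁, hu⟩, v, ⟨hx₂, hv⟩, hsum⟩
    exact ⟨hx₁, hx₂, u, v, hu, hv, hsum⟩
  · rintro ⟨hx₁, hx₂, u, v, hu, hv, hsum⟩
    exact ⟨u, ⟨hx₁, hu⟩, v, ⟨hx₂, hv⟩, hsum⟩

/-- Fixed points of the Davis–Yin operator
`T z = z - P₁ z + P₂ (2 • P₁ z - z - F (P₁ z))` (where `P₁, P₂` are the metric
projections onto nonempty closed convex sets `C₁, C₂`) correspond exactly to points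
`x ∈ C₁ ∩ C₂` with `-F x ∈ N_{C₁}(x) + N_{C₂}(x)`. -/
theorem stmt_7 {X : Type*} [NormedAddCommGroup X] [InnerProductSpace ℝ X] [CompleteSpace X]
    (C₁ C₂ : Set X)
    (h₁ne : C₁.Nonempty) (h₁cl : IsClosed C₁) (h₁cv : Convex ℝ C₁)
    (h₂ne : C₂.Nonempty) (h₂cl : IsClosed C₂) (h₂cv : Convex ℝ C₂)
    (P₁ P₂ : X → X)
    (hP₁ : ∀ z, P₁ z ∈ C₁ ∧ ∀ x ∈ C₁, ‖z - P₁ z‖ ≤ ‖z - x‖)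
    (hP₂ : ∀ z, P₂ z ∈ C₂ ∧ ∀ x ∈ C₂, ‖z - P₂ z‖ ≤ ‖z - x‖)
    (F : X → X) (T : X → X)
    (hT : ∀ z, T z = z - P₁ z + P₂ ((2 : ℝ) • P₁ z - z - F (P₁ z)))
    (x : X) :
    (∃ z, T z = z ∧ x = P₁ z) ↔
      (x ∈ C₁ ∧ x ∈ C₂ ∧ ∃ u v : X,
        (∀ y ∈ C₁, ⟪u, y - x⟫ ≤ 0) ∧ (∀ y ∈ C₂, ⟪v, y - x⟫ ≤ 0) ∧
        F x + u + v = 0) := by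
  exact stmt_7_general h₁cv h₂cv hP₁ hP₂ F T hT x
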